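/- Let I,J,M,N ⊆ {1,…,n} with |I| = |J|, |M| = |N|, I∩M = J∩N = ∅, and I∪M = J∪N. Then r([I|J],[M|N]) = (−q)^{ℓ(I∪N; I∖J) − ℓ(J∪M; J∖I)} r([I∖J | J∖I],[M∖N | N∖M]). -/

import Mathlib

/-!
An index `c ∈ I ∩ J` lies outside `M ∪ N`. Moving column `c` of `[I|J]` to the front costs
a factor `(-q)^{#{x ∈ J : x < c}}` (`colMinor_move_left`), and expanding along it gives
`Σ_i (-q)^{#{x ∈ I : x < i}} X_{ic} [I∖i | J∖c]`. Since `r(ab, w) = Σ r(a, w₁) r(b, w₂)` and all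
generators in `[M|N]` have row index different from `c`, the functional `r(X_{ic}, ·)` acts on
`[M|N]` like `δ_{ic} ε` (`slice_left`), so only the term `i = c` survives (`remove_left`):

  `r([I|J], [M|N]) = (-q)^{#{x ∈ I : x < c} - #{x ∈ J : x < c}} r([I∖c | J∖c], [M|N])`.

Symmetrically an index `c ∈ M ∩ N` lies outside `I ∪ J`. Expanding `[M|N]` along column `c`,
placed last, and using `r(a, bX) = Σ r(a₁, X) r(a₂, b)` removes `c` from `M` and `N`
(`slice_right`, `remove_right`), at the cost of a power of `-q` counting elements above `c`.

Each removal changes the exponent in the reduction formula by exactly the power of `-q` it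
produces. Once `I ∩ J = M ∩ N = ∅` the hypotheses force `N = I` and `M = J`, and the exponent
`ℓ(I;I) - ℓ(J;J)` vanishes because `ℓ(S;S)` depends only on `|S|` (`two_ell_self`).

Expansions along an arbitrary column are handled by `colMinor`, a quantum minor whose columns are
listed in any order; `qMinor_eq_colMinor` identifies it with the permutation sum `[I|J]` when the
list is the increasing enumeration of `J`.
-/

open scoped TensorProduct
open scoped Classical

noncomputable section

namespace QMat

variable (k : Type*) [Field k] (n : ℕ) (q : k)

/-- Defining relations of the quantized coordinate ring `O_q(M_n(k))`. -/
inductive Rel : FreeAlgebra k (Fin n × Fin n) → FreeAlgebra k (Fin n × Fin n) → Prop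
  | col {i l j : Fin n} (h : i < l) :
      Rel (FreeAlgebra.ι k (i, j) * FreeAlgebra.ι k (l, j))
        (q • (FreeAlgebra.ι k (l, j) * FreeAlgebra.ι k (i, j)))
  | row {i j m : Fin n} (h : j < m) :
      Rel (FreeAlgebra.ι k (i, j) * FreeAlgebra.ι k (i, m))
        (q • (FreeAlgebra.ι k (i, m) * FreeAlgebra.ι k (i, j)))
  | swap {i j l m : Fin n} (h1 : i < l) (h2 : m < j) :
      Rel (FreeAlgebra.ι k (i, j) * FreeAlgebra.ι k (l, m))
        (FreeAlgebra.ι k (l, m) * FreeAlgebra.ι k (i, j))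
  | mixed {i j l m : Fin n} (h1 : i < l) (h2 : j < m) :
      Rel (FreeAlgebra.ι k (i, j) * FreeAlgebra.ι k (l, m))
        (FreeAlgebra.ι k (l, m) * FreeAlgebra.ι k (i, j)
          + (q - q⁻¹) • (FreeAlgebra.ι k (i, m) * FreeAlgebra.ι k (l, j)))

/-- The quantized coordinate ring `A = O_q(M_n(k))`. -/
abbrev A : Type _ := RingQuot (Rel k n q)

/-- The generator `X_{ij}` of `O_q(M_n(k))`. -/
def X (i j : Fin n) : A k n q :=
  RingQuot.mkAlgHom k (Rel k n q) (FreeAlgebra.ι k (i, j))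

/-- The number of inversions `ℓ(σ)` of a permutation of `Fin t`. -/
def inversions {t : ℕ} (σ : Equiv.Perm (Fin t)) : ℕ :=
  (Finset.univ.filter fun p : Fin t × Fin t => p.1 < p.2 ∧ σ p.2 < σ p.1).card

/-- The quantum minor `[I|J]` (with junk value `0` when `|I| ≠ |J|`). -/
def qMinor (I J : Finset (Fin n)) : A k n q :=
  if h : I.card = J.card then
    ∑ σ : Equiv.Perm (Fin I.card),
      ((-q) ^ inversions σ) •
        (List.ofFn fun l : Fin I.card =>
          X k n q (↑((I.orderIsoOfFin rfl) (σ l))) (↑((J.orderIsoOfFin h.symm) l))).prod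
  else 0

/-- `ℓ(S;T) = #{(s,t) ∈ S×T : s > t}`. -/
def ell (S T : Finset (Fin n)) : ℕ :=
  ((S ×ˢ T).filter fun p => p.2 < p.1).card

/-- The `(-q)`-integer `[d]_{-q} = (-q)^{d-1} + (-q)^{d-3} + ⋯ + (-q)^{-(d-1)}`. -/
def negqInt (d : ℕ) : k :=
  ∑ s ∈ Finset.range d, (-q) ^ ((d : ℤ) - 1 - 2 * (s : ℤ))

/-- `ξ_q(I;J) = [d₁]_{-q}⋯[d_m]_{-q}` where `d_l = |[1,r_l] ∩ J| - l + 1` for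
`I = {r₁ < ⋯ < r_m}` (with junk value `1` when `|I| ≠ |J|`). -/
def xiq (I J : Finset (Fin n)) : k :=
  if _h : I.card = J.card then
    ∏ l : Fin I.card,
      negqInt k q
        ((J.filter fun x => x ≤ (↑((I.orderIsoOfFin rfl) l) : Fin n)).card - (l : ℕ))
  else 1

/-- The componentwise order `I ≤ J` on index sets of the same cardinality:
writing `I = {i₁ < ⋯ < i_t}` and `J = {j₁ < ⋯ < j_t}`, we require `i_l ≤ j_l` for all `l`. -/
def setLE (I J : Finset (Fin n)) : Prop :=
  I.card = J.card ∧
    ∀ (h : I.card = J.card) (l : Fin I.card),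
      (↑((I.orderIsoOfFin rfl) l) : Fin n) ≤ (↑((J.orderIsoOfFin h.symm) l) : Fin n)

/-- `S^♮ = (X ∩ Y) ⊔ ((X ∪ Y) ∖ S)` relative to the pair `(X, Y)`. -/
def snat (X Y S : Finset (Fin n)) : Finset (Fin n) :=
  (X ∩ Y) ∪ ((X ∪ Y) \ S)

/-- `S_≤(X,Y) = {S ⊆ X ∪ Y : X ∩ Y ⊆ S, |S| = |X|, S ≤ X}`. -/
def sLE (X Y : Finset (Fin n)) : Finset (Finset (Fin n)) :=
  (X ∪ Y).powerset.filter fun S => X ∩ Y ⊆ S ∧ S.card = X.card ∧ setLE n S X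

/-- `S_<(X,Y) = {S ⊆ X ∪ Y : X ∩ Y ⊆ S, |S| = |X|, S < X}`. -/
def sLT (X Y : Finset (Fin n)) : Finset (Finset (Fin n)) :=
  (sLE n X Y).filter fun S => S ≠ X

/-- `S_≥(X,Y) = {T ⊆ X ∪ Y : X ∩ Y ⊆ T, |T| = |X|, T ≥ X}`. -/
def sGE (X Y : Finset (Fin n)) : Finset (Finset (Fin n)) :=
  (X ∪ Y).powerset.filter fun T => X ∩ Y ⊆ T ∧ T.card = X.card ∧ setLE n X T

/-- `S_>(X,Y) = {T ⊆ X ∪ Y : X ∩ Y ⊆ T, |T| = |X|, T > X}`. -/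
def sGT (X Y : Finset (Fin n)) : Finset (Finset (Fin n)) :=
  (sGE n X Y).filter fun T => T ≠ X

/-- `L(S,X,Y) = ℓ((S∖S^♮)∪(Y∖X); X∖S) − ℓ((S∖S^♮)∪(Y∖X); S∖X)`. -/
def Lfun (S X Y : Finset (Fin n)) : ℤ :=
  (ell n ((S \ snat n X Y S) ∪ (Y \ X)) (X \ S) : ℤ)
    - (ell n ((S \ snat n X Y S) ∪ (Y \ X)) (S \ X) : ℤ)

/-- `L^♮(T,X,Y) = ℓ((T^♮∖T)∪(X∖Y); T∖X) − ℓ((T^♮∖T)∪(X∖Y); X∖T)`. -/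
def Lnat (T X Y : Finset (Fin n)) : ℤ :=
  (ell n ((snat n X Y T \ T) ∪ (X \ Y)) (T \ X) : ℤ)
    - (ell n ((snat n X Y T \ T) ∪ (X \ Y)) (X \ T) : ℤ)

/-- The form `A ⊗ A → k` given on pure tensors by `x ⊗ y ↦ f(x) g(y)`. -/
def biform (f g : A k n q →ₗ[k] k) : (A k n q ⊗[k] A k n q) →ₗ[k] k :=
  (TensorProduct.lid k k).toLinearMap ∘ₗ TensorProduct.map f g

/-- Opposite multiplication `A ⊗ A → A`, `x ⊗ y ↦ y * x`. -/
def mulRev : (A k n q ⊗[k] A k n q) →ₗ[k] A k n q :=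
  (LinearMap.mul' k (A k n q)) ∘ₗ (TensorProduct.comm k (A k n q) (A k n q)).toLinearMap

/-- `Σ (a₁ ⊗ b₁) ⊗ (a₂ ⊗ b₂)`, the regrouped double Sweedler decomposition of `a` and `b`. -/
def sweedler2 (Δ : A k n q →ₐ[k] A k n q ⊗[k] A k n q) (a b : A k n q) :
    (A k n q ⊗[k] A k n q) ⊗[k] (A k n q ⊗[k] A k n q) :=
  (TensorProduct.tensorTensorTensorComm k (A k n q) (A k n q) (A k n q) (A k n q))
    (Δ a ⊗ₜ[k] Δ b)

/-- `Δ` is the standard comultiplication: `Δ(X_{ij}) = Σ_l X_{il} ⊗ X_{lj}`. -/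
def IsComul (Δ : A k n q →ₐ[k] A k n q ⊗[k] A k n q) : Prop :=
  ∀ i j : Fin n, Δ (X k n q i j) = ∑ l : Fin n, X k n q i l ⊗ₜ[k] X k n q l j

/-- `ε` is the standard counit: `ε(X_{ij}) = δ_{ij}`. -/
def IsCounit (ε : A k n q →ₐ[k] k) : Prop :=
  ∀ i j : Fin n, ε (X k n q i j) = if i = j then 1 else 0

/-- The bilinear form `r` satisfies the coquasitriangularity conditions (1.7)(i)-(iv)
together with the prescribed values (1.9) on the generators. -/
def IsRForm (Δ : A k n q →ₐ[k] A k n q ⊗[k] A k n q) (ε : A k n q →ₐ[k] k)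
    (r : A k n q →ₗ[k] A k n q →ₗ[k] k) : Prop :=
  -- (i) `Σ r(a₁,b₁) a₂ b₂ = Σ r(a₂,b₂) b₁ a₁`
  (∀ a b : A k n q,
      (TensorProduct.lid k (A k n q))
          ((TensorProduct.map (TensorProduct.lift r) (LinearMap.mul' k (A k n q)))
            (sweedler2 k n q Δ a b)) =
        (TensorProduct.rid k (A k n q))
          ((TensorProduct.map (mulRev k n q) (TensorProduct.lift r))
            (sweedler2 k n q Δ a b))) ∧
  -- (ii) `r(ab, c) = Σ r(a,c₁) r(b,c₂)`
  (∀ a b c : A k n q, r (a * b) c = biform k n q (r a) (r b) (Δ c)) ∧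
  -- (iii) `r(a, bc) = Σ r(a₁,c) r(a₂,b)`
  (∀ a b c : A k n q, r a (b * c) = biform k n q (r.flip c) (r.flip b) (Δ a)) ∧
  -- (iv) `r(a,1) = r(1,a) = ε(a)`
  (∀ a : A k n q, r a 1 = ε a ∧ r 1 a = ε a) ∧
  -- values on generators
  (∀ i j l m : Fin n,
      r (X k n q i j) (X k n q l m) =
        if i = j ∧ l = m ∧ i = l then q
        else if i = j ∧ l = m then 1
        else if l = j ∧ m = i ∧ j < i then q - q⁻¹
        else 0)

/-- `Σ f(a₁,b₁) g(a₂,b₂)`, the convolution-type pairing of two bilinear forms. -/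
def convPair (Δ : A k n q →ₐ[k] A k n q ⊗[k] A k n q)
    (f g : A k n q →ₗ[k] A k n q →ₗ[k] k) (a b : A k n q) : k :=
  (TensorProduct.lid k k)
    ((TensorProduct.map (TensorProduct.lift f) (TensorProduct.lift g))
      (sweedler2 k n q Δ a b))

end QMat

namespace QMat

variable {k : Type*} [Field k] {n : ℕ} {q : k}

/-! ### Minors along an arbitrary sequence of columns -/

/-- The number of elements of `I` below `i`. -/
def lo (I : Finset (Fin n)) (i : Fin n) : ℕ := (I.filter fun x => x < i).card

/-- The number of elements of `I` above `i`. -/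
def hi (I : Finset (Fin n)) (i : Fin n) : ℕ := (I.filter fun x => i < x).card

variable (k q) in
/-- The quantum minor with row set `I` and columns read in the order of the list `L`, defined by
Laplace expansion along the first column. It vanishes unless `L` has length `|I|`; the list is
neither required to be sorted nor free of repetitions. -/
def colMinor : Finset (Fin n) → List (Fin n) → A k n q
  | I, [] => if I = ∅ then 1 else 0
  | I, j :: L => ∑ i ∈ I, ((-q) ^ lo I i) • (X k n q i j * colMinor (I.erase i) L)

lemma lo_erase_of_lt {I : Finset (Fin n)} {i l : Fin n} (hi : i ∈ I) (h : i < l) :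
    lo (I.erase i) l + 1 = lo I l := by
  unfold lo
  rw [Finset.filter_erase, Finset.card_erase_add_one]
  simp [hi, h]

lemma lo_erase_of_le {I : Finset (Fin n)} {i l : Fin n} (h : l ≤ i) :
    lo (I.erase i) l = lo I l := by
  unfold lo
  rw [Finset.filter_erase, Finset.erase_eq_of_notMem]
  simp [h]

lemma hi_erase_of_lt {I : Finset (Fin n)} {i l : Fin n} (hi' : i ∈ I) (h : l < i) :
    hi (I.erase i) l + 1 = hi I l := by
  unfold hi
  rw [Finset.filter_erase, Finset.card_erase_add_one]
  simp [hi', h]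

lemma hi_erase_of_le {I : Finset (Fin n)} {i l : Fin n} (h : i ≤ l) :
    hi (I.erase i) l = hi I l := by
  unfold hi
  rw [Finset.filter_erase, Finset.erase_eq_of_notMem]
  simp [h]

/-- A sum over ordered pairs of distinct elements, grouped into unordered pairs. -/
lemma sum_pairs {B : Type*} [AddCommMonoid B] (I : Finset (Fin n)) (f : Fin n → Fin n → B) :
    ∑ i ∈ I, ∑ l ∈ I.erase i, f i l =
      ∑ i ∈ I, ∑ l ∈ I.filter (fun l => i < l), (f i l + f l i) := by
  simp only [Finset.sum_add_distrib]
  have h : ∑ i ∈ I, ∑ l ∈ I.filter (fun l => i < l), f l i =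
      ∑ i ∈ I, ∑ l ∈ I.filter (fun l => l < i), f i l := by
    apply Finset.sum_comm'
    intro x y
    simp only [Finset.mem_filter]
    tauto
  rw [h, ← Finset.sum_add_distrib]
  refine Finset.sum_congr rfl fun i _ => ?_
  rw [← Finset.sum_union]
  · refine Finset.sum_congr ?_ fun _ _ => rfl
    ext l
    simp only [Finset.mem_erase, Finset.mem_union, Finset.mem_filter]
    constructor
    · rintro ⟨h1, h2⟩
      rcases lt_or_gt_of_ne h1 with h | h
      · exact Or.inr ⟨h2, h⟩
      · exact Or.inl ⟨h2, h⟩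
    · rintro (⟨h1, h2⟩ | ⟨h1, h2⟩)
      · exact ⟨h2.ne', h1⟩
      · exact ⟨h2.ne, h1⟩
  · rw [Finset.disjoint_left]
    intro l h1 h2
    simp only [Finset.mem_filter] at h1 h2
    exact absurd h1.2 h2.2.asymm

lemma X_swap {i l j m : Fin n} (h1 : i < l) (h2 : m < j) :
    X k n q i j * X k n q l m = X k n q l m * X k n q i j := by
  simpa [X] using RingQuot.mkAlgHom_rel k (Rel.swap (q := q) h1 h2)

lemma X_mixed {i l j m : Fin n} (h1 : i < l) (h2 : j < m) :
    X k n q i j * X k n q l m = X k n q l m * X k n q i j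
      + (q - q⁻¹) • (X k n q i m * X k n q l j) := by
  simpa [X] using RingQuot.mkAlgHom_rel k (Rel.mixed (q := q) h1 h2)

/-- The `2 × 2` quantum minor is `(-q)`-alternating in its columns. -/
lemma two_cols (hq : q ≠ 0) {i l j m : Fin n} (h1 : i < l) (h2 : j < m) :
    X k n q i m * X k n q l j - q • (X k n q l m * X k n q i j) =
      (-q) • (X k n q i j * X k n q l m - q • (X k n q l j * X k n q i m)) := by
  rw [X_mixed h1 h2, ← X_swap h1 h2]
  have : q * (q - q⁻¹) = q * q - 1 := by field_simp
  simp only [smul_sub, smul_add, smul_smul, neg_mul, neg_smul, this, sub_smul, one_smul]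
  abel

/-- Interchanging the first two columns multiplies a quantum minor by `-q`. -/
lemma colMinor_swap (hq : q ≠ 0) {j m : Fin n} (h : j < m) (I : Finset (Fin n))
    (L : List (Fin n)) :
    colMinor k q I (m :: j :: L) = (-q) • colMinor k q I (j :: m :: L) := by
  simp only [colMinor, Finset.mul_sum, Finset.smul_sum]
  rw [sum_pairs, sum_pairs]
  refine Finset.sum_congr rfl fun i hi => Finset.sum_congr rfl fun l hl => ?_
  obtain ⟨hl, hil⟩ := Finset.mem_filter.1 hl
  rw [Finset.erase_right_comm (a := l), lo_erase_of_le hil.le, ← lo_erase_of_lt hi hil]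
  set Y := colMinor k q ((I.erase i).erase l) L
  set a := lo I i
  set b := lo (I.erase i) l
  have key := congrArg (fun z => ((-q) ^ (a + b)) • (z * Y)) (two_cols hq hil h)
  simp only [mul_smul_comm, smul_smul, sub_mul, smul_mul_assoc, smul_sub, ← mul_assoc] at key ⊢
  have e1 : (-q) ^ a * (-q) ^ b = (-q) ^ (a + b) := by ring
  have e2 : (-q) ^ (b + 1) * (-q) ^ a = - ((-q) ^ (a + b) * q) := by ring
  have e3 : (-q) * (-q) ^ a * (-q) ^ b = (-q) ^ (a + b) * (-q) := by ring
  have e4 : (-q) * (-q) ^ (b + 1) * (-q) ^ a = - ((-q) ^ (a + b) * (-q) * q) := by ring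
  rw [e1, e2, e3, e4, neg_smul, neg_smul, ← sub_eq_add_neg, ← sub_eq_add_neg]
  exact key

lemma colMinor_congr_append {L L' : List (Fin n)} {c : k}
    (h : ∀ I, colMinor k q I L = c • colMinor k q I L') (P : List (Fin n))
    (I : Finset (Fin n)) :
    colMinor k q I (P ++ L) = c • colMinor k q I (P ++ L') := by
  induction P generalizing I with
  | nil => exact h I
  | cons a P ih =>
    simp only [List.cons_append, colMinor, ih, Finset.smul_sum, mul_smul_comm]
    exact Finset.sum_congr rfl fun i _ => smul_comm _ _ _

/-- Moving a column to the front past smaller ones. -/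
lemma colMinor_move_left (hq : q ≠ 0) {c : Fin n} (L₁ L₂ : List (Fin n))
    (h : ∀ a ∈ L₁, a < c) (I : Finset (Fin n)) :
    colMinor k q I (c :: (L₁ ++ L₂)) = ((-q) ^ L₁.length) • colMinor k q I (L₁ ++ c :: L₂) := by
  induction L₁ generalizing I with
  | nil => simp
  | cons a L ih =>
    have ih' := ih fun b hb => h b (List.mem_cons_of_mem _ hb)
    rw [List.cons_append, colMinor_swap hq (h a List.mem_cons_self)]
    have := colMinor_congr_append ih' [a] I
    simp only [List.cons_append, List.nil_append] at this ⊢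
    rw [this, smul_smul, List.length_cons, pow_succ']

/-- Moving a column to the end past larger ones. -/
lemma colMinor_move_right (hq : q ≠ 0) {c : Fin n} (L₁ L₂ : List (Fin n))
    (h : ∀ a ∈ L₂, c < a) (I : Finset (Fin n)) :
    colMinor k q I (L₁ ++ L₂ ++ [c]) =
      ((-q) ^ L₂.length) • colMinor k q I (L₁ ++ c :: L₂) := by
  induction L₂ generalizing L₁ I with
  | nil => simp
  | cons b L ih =>
    have ih' := ih (L₁ ++ [b]) (fun a ha => h a (List.mem_cons_of_mem _ ha)) I
    have := colMinor_congr_append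
      (fun I => colMinor_swap hq (h b List.mem_cons_self) I L) L₁ I
    simp only [List.append_assoc, List.cons_append, List.nil_append] at this ih' ⊢
    rw [ih', this, smul_smul, List.length_cons, pow_succ]

/-- Laplace expansion along the last column. -/
lemma colMinor_last (I : Finset (Fin n)) (L : List (Fin n)) (j : Fin n) :
    colMinor k q I (L ++ [j]) =
      ∑ l ∈ I, ((-q) ^ hi I l) • (colMinor k q (I.erase l) L * X k n q l j) := by
  induction L generalizing I with
  | nil =>
    simp only [List.nil_append, colMinor]
    refine Finset.sum_congr rfl fun i hiI => ?_
    by_cases h : I.erase i = ∅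
    · have hI : I = {i} := by
        rw [← Finset.insert_erase hiI, h]; rfl
      subst hI
      have h1 : lo {i} i = 0 := by simp [lo]
      have h2 : hi {i} i = 0 := by simp [hi]
      simp [h1, h2]
    · simp [h]
  | cons a L ih =>
    simp only [List.cons_append, colMinor, ih, Finset.mul_sum, Finset.smul_sum, Finset.sum_mul]
    rw [Finset.sum_comm' (s' := fun l => I.erase l) (t' := I)]
    · refine Finset.sum_congr rfl fun l hl => Finset.sum_congr rfl fun i hi' => ?_
      obtain ⟨hne, hiI⟩ := Finset.mem_erase.1 hi'
      rw [Finset.erase_right_comm (a := l)]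
      simp only [mul_smul_comm, smul_mul_assoc, smul_smul, mul_assoc, ← pow_add]
      congr 2
      rcases lt_or_gt_of_ne hne with h | h
      · rw [hi_erase_of_le h.le, lo_erase_of_le h.le, add_comm]
      · have h1 := hi_erase_of_lt hiI h
        have h2 := lo_erase_of_lt hl h
        omega
    · intro x y
      simp only [Finset.mem_erase, ne_eq]
      rw [eq_comm]
      tauto

/-! ### Comparison with the permutation sum -/

/-- The number of inversions of a finite sequence. -/
def invSeq {t : ℕ} (f : Fin t → Fin n) : ℕ :=
  (Finset.univ.filter fun p : Fin t × Fin t => p.1 < p.2 ∧ f p.2 < f p.1).card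

lemma invSeq_cons {t : ℕ} (i : Fin n) (g : Fin t → Fin n) :
    invSeq (Fin.cons i g : Fin (t + 1) → Fin n) =
      (Finset.univ.filter fun l => g l < i).card + invSeq g := by
  simp only [invSeq, Finset.card_filter, Fintype.sum_prod_type, Fin.sum_univ_succ]
  simp

/-- The column minor as a sum over the enumerations of its row set. -/
lemma sum_seq_eq_colMinor {t : ℕ} (I : Finset (Fin n)) (hI : I.card = t) (g : Fin t → Fin n) :
    (∑ f : Fin t → Fin n, if Function.Injective f ∧ ∀ l, f l ∈ I then
      ((-q) ^ invSeq f) • (List.ofFn fun l => X k n q (f l) (g l)).prod else 0) =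
      colMinor k q I (List.ofFn g) := by
  induction t generalizing I with
  | zero =>
    have : I = ∅ := Finset.card_eq_zero.1 hI
    subst this
    simp [colMinor, Function.injective_of_subsingleton, invSeq]
  | succ t ih =>
    rw [← (Fin.consEquiv fun _ => Fin n).sum_comp, Fintype.sum_prod_type, List.ofFn_succ, colMinor,
      ← Finset.sum_subset (Finset.subset_univ I)]
    · refine Finset.sum_congr rfl fun i hiI => ?_
      rw [← ih (I.erase i) (by rw [Finset.card_erase_of_mem hiI, hI]; rfl), Finset.mul_sum,
        Finset.smul_sum]
      refine Finset.sum_congr rfl fun f _ => ?_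
      have hiff : (Function.Injective (Fin.cons i f : Fin (t + 1) → Fin n) ∧
          ∀ l, (Fin.cons i f : Fin (t + 1) → Fin n) l ∈ I) ↔
          (Function.Injective f ∧ ∀ l, f l ∈ I.erase i) := by
        rw [Fin.cons_injective_iff, Fin.forall_fin_succ]
        simp only [Set.mem_range, not_exists, Fin.cons_zero, Fin.cons_succ, Finset.mem_erase]
        constructor
        · rintro ⟨⟨h1, h2⟩, h3, h4⟩
          exact ⟨h2, fun l => ⟨h1 l, h4 l⟩⟩
        · rintro ⟨h1, h2⟩
          exact ⟨⟨fun l => (h2 l).1, h1⟩, hiI, fun l => (h2 l).2⟩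
      have hce : (Fin.consEquiv fun _ => Fin n) (i, f) = (Fin.cons i f : Fin (t + 1) → Fin n) := rfl
      simp only [hce]
      by_cases hf : Function.Injective f ∧ ∀ l, f l ∈ I.erase i
      · rw [if_pos (hiff.2 hf), if_pos hf, invSeq_cons, pow_add, List.ofFn_succ, List.prod_cons,
          mul_smul_comm, smul_smul]
        simp only [Fin.cons_zero, Fin.cons_succ]
        congr 3
        -- `f` enumerates `I.erase i`, so its entries below `i` are the elements of `I` below `i`
        have himg : Finset.univ.image f = I.erase i := by
          apply Finset.eq_of_subset_of_card_le
          · intro x hx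
            obtain ⟨l, _, rfl⟩ := Finset.mem_image.1 hx
            exact hf.2 l
          · rw [Finset.card_image_of_injective _ hf.1, Finset.card_erase_of_mem hiI, hI]
            simp
        rw [← lo_erase_of_le (I := I) (le_refl i), lo, ← himg, Finset.filter_image,
          Finset.card_image_of_injective _ hf.1]
      · rw [if_neg (fun h => hf (hiff.1 h)), if_neg hf, mul_zero, smul_zero]
    · intro i _ hi
      refine Finset.sum_eq_zero fun f _ => if_neg ?_
      rintro ⟨-, h⟩
      exact hi (by simpa using h 0)

lemma qMinor_eq_sum {t : ℕ} (I J : Finset (Fin n)) (hI : I.card = t) (hJ : J.card = t) :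
    qMinor k n q I J = ∑ σ : Equiv.Perm (Fin t), ((-q) ^ inversions σ) •
      (List.ofFn fun l : Fin t =>
        X k n q (I.orderEmbOfFin hI (σ l)) (J.orderEmbOfFin hJ l)).prod := by
  subst hI
  rw [qMinor, dif_pos hJ.symm]
  rfl

/-- The quantum minor `[I|J]` is the column minor along the increasing enumeration of `J`. -/
lemma qMinor_eq_colMinor (I J : Finset (Fin n)) (h : I.card = J.card) (L : List (Fin n))
    (hL : L.Pairwise (· < ·)) (hLJ : ∀ x, x ∈ L ↔ x ∈ J) :
    qMinor k n q I J = colMinor k q I L := by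
  have hL' : L = List.ofFn (J.orderEmbOfFin h.symm) := by
    refine List.Pairwise.eq_of_mem_iff hL ?_ fun x => ?_
    · rw [List.pairwise_ofFn]
      exact fun i j hij => (J.orderEmbOfFin h.symm).strictMono hij
    · rw [hLJ, List.mem_ofFn', Finset.range_orderEmbOfFin]
      rfl
  rw [qMinor_eq_sum I J rfl h.symm, hL', ← sum_seq_eq_colMinor I rfl, ← Finset.sum_filter]
  set e := I.orderEmbOfFin rfl
  refine Finset.sum_bij (fun σ _ => fun l => e (σ l)) ?_ ?_ ?_ ?_
  · intro σ _
    rw [Finset.mem_filter]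
    exact ⟨Finset.mem_univ _, e.injective.comp σ.injective,
      fun l => Finset.orderEmbOfFin_mem _ _ _⟩
  · intro σ _ τ _ hst
    ext l
    exact congrArg Fin.val (e.injective (congrFun hst l))
  · intro f hf
    obtain ⟨hinj, hmem⟩ := (Finset.mem_filter.1 hf).2
    have hex : ∀ l, ∃ l', e l' = f l := fun l => by
      have : f l ∈ Set.range e := by
        rw [Finset.range_orderEmbOfFin]; exact hmem l
      exact this
    choose s hs using hex
    have hsinj : Function.Injective s := fun a b hab => hinj (by rw [← hs, ← hs, hab])
    exact ⟨Equiv.ofBijective s (Finite.injective_iff_bijective.1 hsinj), Finset.mem_univ _,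
      funext fun l => by simp [hs]⟩
  · intro σ _
    congr 2
    simp only [inversions, invSeq, OrderEmbedding.lt_iff_lt]

/-! ### Pairing with a generator -/

/-- The map `x ⊗ y ↦ f(x) y`. -/
def slice (f : A k n q →ₗ[k] k) : (A k n q ⊗[k] A k n q) →ₗ[k] A k n q :=
  (TensorProduct.lid k (A k n q)).toLinearMap ∘ₗ TensorProduct.map f LinearMap.id

@[simp] lemma slice_tmul (f : A k n q →ₗ[k] k) (x y : A k n q) :
    slice f (x ⊗ₜ[k] y) = f x • y := by
  simp [slice]

lemma biform_eq_slice (f g : A k n q →ₗ[k] k) (T : A k n q ⊗[k] A k n q) :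
    biform k n q f g T = g (slice f T) := by
  induction T with
  | zero => simp
  | tmul x y => simp [biform]
  | add x y hx hy => simp [hx, hy]

/-- If the functionals `f i j` multiply like matrix coefficients, so do their slices. -/
lemma slice_mul (f : Fin n → Fin n → A k n q →ₗ[k] k)
    (hf : ∀ i j x y, f i j (x * y) = ∑ p, f p j x * f i p y) (i j : Fin n)
    (T T' : A k n q ⊗[k] A k n q) :
    slice (f i j) (T * T') = ∑ p, slice (f p j) T * slice (f i p) T' := by
  induction T with
  | zero => simp
  | add x y hx hy => simp [add_mul, hx, hy, Finset.sum_add_distrib]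
  | tmul x y =>
    induction T' with
    | zero => simp
    | add x y hx hy => simp [mul_add, hx, hy, Finset.sum_add_distrib]
    | tmul x' y' =>
      simp [hf, Finset.sum_smul, smul_smul, mul_comm]

variable {Δ : A k n q →ₐ[k] A k n q ⊗[k] A k n q} {ε : A k n q →ₐ[k] k}
  {r : A k n q →ₗ[k] A k n q →ₗ[k] k}

variable (k q) in
/-- The subalgebra generated by the `X_{ij}` whose row index `i` lies in `I`. -/
def rowAlg (I : Finset (Fin n)) : Subalgebra k (A k n q) :=
  Algebra.adjoin k {x | ∃ i ∈ I, ∃ j, x = X k n q i j}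

lemma colMinor_mem_rowAlg (I K : Finset (Fin n)) (h : K ⊆ I) (L : List (Fin n)) :
    colMinor k q K L ∈ rowAlg k q I := by
  induction L generalizing K with
  | nil =>
    rw [colMinor]
    split_ifs
    exacts [one_mem _, zero_mem _]
  | cons j L ih =>
    rw [colMinor]
    refine sum_mem fun i hi => Subalgebra.smul_mem _ (mul_mem ?_ ?_) _
    · exact Algebra.subset_adjoin ⟨i, h hi, j, rfl⟩
    · exact ih _ ((Finset.erase_subset _ _).trans h)

lemma r_X_mul (hΔ : IsComul k n q Δ) (hr : IsRForm k n q Δ ε r) (i j : Fin n) (x y : A k n q) :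
    r (X k n q i j) (x * y) = ∑ p, r (X k n q p j) x * r (X k n q i p) y := by
  rw [hr.2.2.1, hΔ, map_sum]
  exact Finset.sum_congr rfl fun p _ => by simp [biform, mul_comm]

lemma r_mul_X (hΔ : IsComul k n q Δ) (hr : IsRForm k n q Δ ε r) (i j : Fin n) (x y : A k n q) :
    r (x * y) (X k n q i j) = ∑ p, r x (X k n q i p) * r y (X k n q p j) := by
  rw [hr.2.1, hΔ, map_sum]
  exact Finset.sum_congr rfl fun p _ => by simp [biform]

/-- On elements whose rows avoid `c`, the functional `r(X_{ic}, ·)` acts like `δ_{ic} ε`. -/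
lemma slice_left (hΔ : IsComul k n q Δ) (hε : IsCounit k n q ε) (hr : IsRForm k n q Δ ε r)
    {M : Finset (Fin n)} {c : Fin n} (hc : c ∉ M) {w : A k n q} (hw : w ∈ rowAlg k q M)
    (i : Fin n) :
    slice (r (X k n q i c)) (Δ w) = if i = c then w else 0 := by
  induction hw using Algebra.adjoin_induction generalizing i with
  | mem x hx =>
    obtain ⟨l, hl, m, rfl⟩ := hx
    have hlc : l ≠ c := fun h => hc (h ▸ hl)
    rw [hΔ, map_sum]
    have : ∀ s, slice (r (X k n q i c)) (X k n q l s ⊗ₜ[k] X k n q s m) =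
        if l = s then (if i = c then X k n q s m else 0) else 0 := by
      intro s
      rw [slice_tmul, hr.2.2.2.2]
      by_cases h1 : i = c
      · subst h1
        by_cases h2 : l = s <;> simp [h2, hlc, hlc.symm]
        subst h2
        simp [hlc.symm]
      · simp [h1, hlc]
    simp [this]
  | algebraMap a =>
    rw [AlgHom.commutes, Algebra.algebraMap_eq_smul_one, map_smul,
      Algebra.TensorProduct.one_def, slice_tmul, (hr.2.2.2.1 _).1, hε,
      Algebra.algebraMap_eq_smul_one]
    split_ifs <;> simp
  | add x y _ _ hx hy =>
    rw [map_add, map_add, hx, hy]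
    split_ifs <;> simp
  | mul x y _ _ hx hy =>
    rw [map_mul, slice_mul (fun i j => r (X k n q i j)) (fun i j => r_X_mul hΔ hr i j)]
    simp only [hx, hy, ite_mul, zero_mul, Finset.sum_ite_eq', Finset.mem_univ, if_true]
    split_ifs <;> simp

/-- On elements whose rows avoid `c`, the functional `r(·, X_{lc})` acts like `δ_{lc} ε`. -/
lemma slice_right (hΔ : IsComul k n q Δ) (hε : IsCounit k n q ε) (hr : IsRForm k n q Δ ε r)
    {I : Finset (Fin n)} {c : Fin n} (hc : c ∉ I) {w : A k n q} (hw : w ∈ rowAlg k q I)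
    (l : Fin n) :
    slice (r.flip (X k n q l c)) (Δ w) = if l = c then w else 0 := by
  induction hw using Algebra.adjoin_induction generalizing l with
  | mem x hx =>
    obtain ⟨i, hi, j, rfl⟩ := hx
    have hic : i ≠ c := fun h => hc (h ▸ hi)
    rw [hΔ, map_sum]
    have : ∀ s, slice (r.flip (X k n q l c)) (X k n q i s ⊗ₜ[k] X k n q s j) =
        if i = s then (if l = c then X k n q s j else 0) else 0 := by
      intro s
      rw [slice_tmul, LinearMap.flip_apply, hr.2.2.2.2]
      by_cases h1 : l = c
      · subst h1
        by_cases h2 : i = s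
        · subst h2; simp [hic]
        · simp [h2, hic.symm]
      · simp [h1, hic.symm]
    simp [this]
  | algebraMap a =>
    rw [AlgHom.commutes, Algebra.algebraMap_eq_smul_one, map_smul,
      Algebra.TensorProduct.one_def, slice_tmul, LinearMap.flip_apply, (hr.2.2.2.1 _).2, hε,
      Algebra.algebraMap_eq_smul_one]
    split_ifs <;> simp
  | add x y _ _ hx hy =>
    rw [map_add, map_add, hx, hy]
    split_ifs <;> simp
  | mul x y _ _ hx hy =>
    rw [map_mul, slice_mul (fun i j => r.flip (X k n q j i))
      (fun i j x y => by simpa using r_mul_X hΔ hr j i x y)]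
    simp only [hx, hy, mul_ite, mul_zero, Finset.sum_ite_eq', Finset.mem_univ, if_true, ite_mul,
      zero_mul]

/-! ### Removing one common index -/

/-- The increasing enumeration of `J`, cut at one of its elements. -/
lemma exists_split (J : Finset (Fin n)) {c : Fin n} (hc : c ∈ J) :
    ∃ L₁ L₂ : List (Fin n), (L₁ ++ c :: L₂).Pairwise (· < ·) ∧
      (∀ x, x ∈ L₁ ++ c :: L₂ ↔ x ∈ J) ∧ (L₁ ++ L₂).Pairwise (· < ·) ∧
      (∀ x, x ∈ L₁ ++ L₂ ↔ x ∈ J.erase c) ∧ (∀ a ∈ L₁, a < c) ∧ (∀ a ∈ L₂, c < a) ∧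
      L₁.length = lo J c ∧ L₂.length = hi J c := by
  obtain ⟨L₁, L₂, hL⟩ := List.append_of_mem ((Finset.mem_sort (· ≤ ·)).2 hc)
  have hp : (L₁ ++ c :: L₂).Pairwise (· < ·) := by
    rw [← hL]; exact (Finset.sortedLT_sort J).pairwise
  have hm : ∀ x, x ∈ L₁ ++ c :: L₂ ↔ x ∈ J := fun x => by rw [← hL, Finset.mem_sort]
  obtain ⟨p1, p2, p3⟩ := List.pairwise_append.1 hp
  obtain ⟨p4, p5⟩ := List.pairwise_cons.1 p2
  have hl : ∀ a ∈ L₁, a < c := fun a ha => p3 a ha c List.mem_cons_self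
  refine ⟨L₁, L₂, hp, hm, ?_, ?_, hl, p4, ?_, ?_⟩
  · exact List.pairwise_append.2 ⟨p1, p5, fun a ha b hb => p3 a ha b (List.mem_cons_of_mem _ hb)⟩
  · intro x
    rw [Finset.mem_erase, ← hm]
    simp only [List.mem_append, List.mem_cons]
    constructor
    · rintro (h | h)
      · exact ⟨(hl x h).ne, Or.inl h⟩
      · exact ⟨(p4 x h).ne', Or.inr (Or.inr h)⟩
    · rintro ⟨h1, h | h | h⟩
      exacts [Or.inl h, absurd h h1, Or.inr h]
  · rw [lo, ← List.toFinset_card_of_nodup (p1.imp fun h => h.ne)]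
    congr 1
    ext x
    rw [Finset.mem_filter, ← hm, List.mem_toFinset]
    simp only [List.mem_append, List.mem_cons]
    constructor
    · exact fun h => ⟨Or.inl h, hl x h⟩
    · rintro ⟨h | h | h, h'⟩
      exacts [h, absurd h h'.ne, absurd (p4 x h) h'.asymm]
  · rw [hi, ← List.toFinset_card_of_nodup (p5.imp fun h => h.ne)]
    congr 1
    ext x
    rw [Finset.mem_filter, ← hm, List.mem_toFinset]
    simp only [List.mem_append, List.mem_cons]
    constructor
    · exact fun h => ⟨Or.inr (Or.inr h), p4 x h⟩
    · rintro ⟨h | h | h, h'⟩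
      exacts [absurd (hl x h) h'.asymm, absurd h h'.ne', h]

lemma qMinor_mem_rowAlg (I J : Finset (Fin n)) (h : I.card = J.card) :
    qMinor k n q I J ∈ rowAlg k q I := by
  rw [qMinor_eq_colMinor I J h _ (Finset.sortedLT_sort J).pairwise fun x => Finset.mem_sort _]
  exact colMinor_mem_rowAlg I I subset_rfl _

/-- In the expansion of `[I|J]` along column `c` only the row `c` pairs nontrivially with
`[M|N]`. -/
lemma remove_left (hq : q ≠ 0) (hΔ : IsComul k n q Δ) (hε : IsCounit k n q ε)
    (hr : IsRForm k n q Δ ε r) {I J M N : Finset (Fin n)} (hIJ : I.card = J.card)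
    (hMN : M.card = N.card) {c : Fin n} (hI : c ∈ I) (hJ : c ∈ J) (hM : c ∉ M) :
    r (qMinor k n q I J) (qMinor k n q M N) = (-q) ^ ((lo I c : ℤ) - lo J c) *
      r (qMinor k n q (I.erase c) (J.erase c)) (qMinor k n q M N) := by
  obtain ⟨L₁, L₂, a1, a2, a3, a4, a5, a6, a7, a8⟩ := exists_split J hJ
  have hcard : (I.erase c).card = (J.erase c).card := by
    rw [Finset.card_erase_of_mem hI, Finset.card_erase_of_mem hJ, hIJ]
  have hw := qMinor_mem_rowAlg (k := k) (q := q) M N hMN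
  rw [qMinor_eq_colMinor I J hIJ _ a1 a2, qMinor_eq_colMinor _ _ hcard _ a3 a4]
  set w := qMinor k n q M N
  have h1 := congrArg (fun z => r z w) (colMinor_move_left hq L₁ L₂ a5 I)
  simp only [colMinor, map_sum, map_smul, LinearMap.sum_apply, LinearMap.smul_apply,
    hr.2.1, biform_eq_slice, slice_left hΔ hε hr hM hw, a7, apply_ite, map_zero, smul_zero] at h1
  rw [Finset.sum_ite_eq' I c, if_pos hI] at h1
  have hq' : -q ≠ 0 := neg_ne_zero.2 hq
  rw [zpow_sub₀ hq', zpow_natCast, zpow_natCast, div_mul_eq_mul_div, eq_div_iff (pow_ne_zero _ hq'),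
    mul_comm]
  exact h1.symm

/-- In the expansion of `[M|N]` along column `c` only the row `c` pairs nontrivially with
`[I|J]`. -/
lemma remove_right (hq : q ≠ 0) (hΔ : IsComul k n q Δ) (hε : IsCounit k n q ε)
    (hr : IsRForm k n q Δ ε r) {I J M N : Finset (Fin n)} (hIJ : I.card = J.card)
    (hMN : M.card = N.card) {c : Fin n} (hM : c ∈ M) (hN : c ∈ N) (hI : c ∉ I) :
    r (qMinor k n q I J) (qMinor k n q M N) = (-q) ^ ((hi M c : ℤ) - hi N c) *
      r (qMinor k n q I J) (qMinor k n q (M.erase c) (N.erase c)) := by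
  obtain ⟨L₁, L₂, a1, a2, a3, a4, a5, a6, a7, a8⟩ := exists_split N hN
  have hcard : (M.erase c).card = (N.erase c).card := by
    rw [Finset.card_erase_of_mem hM, Finset.card_erase_of_mem hN, hMN]
  have hw := qMinor_mem_rowAlg (k := k) (q := q) I J hIJ
  rw [qMinor_eq_colMinor M N hMN _ a1 a2, qMinor_eq_colMinor _ _ hcard _ a3 a4]
  set w := qMinor k n q I J
  have h1 := congrArg (fun z => r w z) (colMinor_move_right hq L₁ L₂ a6 M)
  simp only [colMinor_last, map_sum, map_smul,
    hr.2.2.1, biform_eq_slice, slice_right hΔ hε hr hI hw, a8, apply_ite, map_zero, smul_zero,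
    LinearMap.flip_apply] at h1
  rw [Finset.sum_ite_eq' M c, if_pos hM] at h1
  have hq' : -q ≠ 0 := neg_ne_zero.2 hq
  rw [zpow_sub₀ hq', zpow_natCast, zpow_natCast, div_mul_eq_mul_div, eq_div_iff (pow_ne_zero _ hq'),
    mul_comm]
  exact h1.symm

/-! ### Exponents -/

lemma lo_union (S T : Finset (Fin n)) (h : Disjoint S T) (c : Fin n) :
    lo (S ∪ T) c = lo S c + lo T c := by
  rw [lo, Finset.filter_union, Finset.card_union_of_disjoint]
  · rfl
  · exact Finset.disjoint_filter_filter h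

lemma lo_sdiff (S T : Finset (Fin n)) (c : Fin n) :
    lo S c + lo (T \ S) c = lo T c + lo (S \ T) c := by
  rw [← lo_union _ _ Finset.disjoint_sdiff, ← lo_union _ _ Finset.disjoint_sdiff,
    Finset.union_sdiff_self_eq_union, Finset.union_sdiff_self_eq_union, Finset.union_comm]

lemma lo_add_hi {S : Finset (Fin n)} {c : Fin n} (hc : c ∈ S) :
    lo S c + hi S c + 1 = S.card := by
  rw [← Finset.card_erase_add_one hc, lo, hi, ← Finset.card_union_of_disjoint]
  · congr 2
    ext x
    simp only [Finset.mem_union, Finset.mem_filter, Finset.mem_erase]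
    rw [← and_or_left, ← lt_or_lt_iff_ne, and_comm]
  · rw [Finset.disjoint_filter]
    exact fun x _ h => h.asymm

lemma ell_insert {S : Finset (Fin n)} (T : Finset (Fin n)) {c : Fin n} (hc : c ∉ S) :
    ell n (insert c S) T = lo T c + ell n S T := by
  simp only [ell, lo, Finset.card_filter, Finset.sum_product]
  rw [Finset.sum_insert hc]

/-- `ℓ(S;S)` depends only on `|S|`: it is half the number of ordered pairs of distinct elements. -/
lemma two_ell_self (S : Finset (Fin n)) : ell n S S + ell n S S + S.card = S.card * S.card := by
  have h : ∀ x ∈ S, lo S x + hi S x + 1 = S.card := fun x hx => lo_add_hi hx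
  have h1 : ell n S S = ∑ x ∈ S, lo S x := by
    simp only [ell, lo, Finset.card_filter, Finset.sum_product]
  have h2 : ell n S S = ∑ x ∈ S, hi S x := by
    simp only [ell, hi, Finset.card_filter, Finset.sum_product_right]
  have h3 := Finset.sum_congr rfl h
  simp only [Finset.sum_add_distrib, ← h1, ← h2] at h3
  simpa using h3

lemma erase_sdiff_erase {S T : Finset (Fin n)} {c : Fin n} (hT : c ∈ T) :
    S.erase c \ T.erase c = S \ T := by
  ext x
  simp only [Finset.mem_sdiff, Finset.mem_erase]
  by_cases h : x = c
  · subst h; simp [hT]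
  · simp [h]

end QMat

open QMat

/-- The reduction formula of Lemma 4.3. -/
theorem stmt12 (k : Type*) [Field k] (n : ℕ) (hn : 0 < n) (q : k) (hq : q ≠ 0)
    (Δ : A k n q →ₐ[k] A k n q ⊗[k] A k n q) (ε : A k n q →ₐ[k] k)
    (hΔ : IsComul k n q Δ) (hε : IsCounit k n q ε)
    (r : A k n q →ₗ[k] A k n q →ₗ[k] k) (hr : IsRForm k n q Δ ε r)
    (I J M N : Finset (Fin n)) (hIJ : I.card = J.card) (hMN : M.card = N.card)
    (h1 : I ∩ M = ∅) (h2 : J ∩ N = ∅) (h3 : I ∪ M = J ∪ N) :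
    r (qMinor k n q I J) (qMinor k n q M N) =
      (-q) ^ ((ell n (I ∪ N) (I \ J) : ℤ) - (ell n (J ∪ M) (J \ I) : ℤ)) *
        r (qMinor k n q (I \ J) (J \ I)) (qMinor k n q (M \ N) (N \ M)) := by
  induction hd : I.card + M.card using Nat.strong_induction_on generalizing I J M N with
  | _ d ih =>
  have hq' : -q ≠ 0 := neg_ne_zero.2 hq
  have e1 : ∀ x, x ∈ I → x ∉ M := fun x h h' =>
    Finset.notMem_empty x (h1 ▸ Finset.mem_inter.2 ⟨h, h'⟩)
  have e2 : ∀ x, x ∈ J → x ∉ N := fun x h h' =>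
    Finset.notMem_empty x (h2 ▸ Finset.mem_inter.2 ⟨h, h'⟩)
  have e3 : ∀ x, x ∈ I ∨ x ∈ M ↔ x ∈ J ∨ x ∈ N := fun x => by
    rw [← Finset.mem_union, h3, Finset.mem_union]
  by_cases hc : ∃ c, c ∈ I ∧ c ∈ J
  · obtain ⟨c, hI, hJ⟩ := hc
    have hM := e1 c hI
    have hN := e2 c hJ
    have hlt : (I.erase c).card < I.card := Finset.card_erase_lt_of_mem hI
    rw [remove_left hq hΔ hε hr hIJ hMN hI hJ hM,
      ih ((I.erase c).card + M.card) (by omega) (I.erase c) (J.erase c) M N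
        (by rw [Finset.card_erase_of_mem hI, Finset.card_erase_of_mem hJ, hIJ]) hMN
        (by rw [Finset.erase_inter, h1]; rfl) (by rw [Finset.erase_inter, h2]; rfl)
        (by rw [← Finset.erase_eq_of_notMem hM, ← Finset.erase_eq_of_notMem hN,
              ← Finset.erase_union_distrib, h3, Finset.erase_union_distrib]) rfl,
      erase_sdiff_erase hJ, erase_sdiff_erase hI, ← mul_assoc, ← zpow_add₀ hq']
    congr 2
    have f1 := ell_insert (S := I.erase c ∪ N) (I \ J) (c := c) (by simp [hN])
    have f2 := ell_insert (S := J.erase c ∪ M) (J \ I) (c := c) (by simp [hM])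
    rw [← Finset.insert_union, Finset.insert_erase hI] at f1
    rw [← Finset.insert_union, Finset.insert_erase hJ] at f2
    have f3 := lo_sdiff I J c
    omega
  by_cases hc' : ∃ c, c ∈ M ∧ c ∈ N
  · obtain ⟨c, hM, hN⟩ := hc'
    have hI : c ∉ I := fun h => e1 c h hM
    have hJ : c ∉ J := fun h => e2 c h hN
    have hlt : (M.erase c).card < M.card := Finset.card_erase_lt_of_mem hM
    rw [remove_right hq hΔ hε hr hIJ hMN hM hN hI,
      ih (I.card + (M.erase c).card) (by omega) I J (M.erase c) (N.erase c) hIJ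
        (by rw [Finset.card_erase_of_mem hM, Finset.card_erase_of_mem hN, hMN])
        (by rw [Finset.inter_erase, h1]; rfl) (by rw [Finset.inter_erase, h2]; rfl)
        (by rw [← Finset.erase_eq_of_notMem hI, ← Finset.erase_eq_of_notMem hJ,
              ← Finset.erase_union_distrib, h3, Finset.erase_union_distrib]) rfl,
      erase_sdiff_erase hN, erase_sdiff_erase hM, ← mul_assoc, ← zpow_add₀ hq']
    congr 2
    have f1 := ell_insert (S := I ∪ N.erase c) (I \ J) (c := c) (by simp [hI])
    have f2 := ell_insert (S := J ∪ M.erase c) (J \ I) (c := c) (by simp [hJ])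
    rw [← Finset.union_insert, Finset.insert_erase hN] at f1
    rw [← Finset.union_insert, Finset.insert_erase hM] at f2
    have f3 := lo_sdiff M N c
    have f4 := lo_add_hi hM
    have f5 := lo_add_hi hN
    have g1 : N \ M = I \ J := by
      ext x
      simp only [Finset.mem_sdiff]
      exact ⟨fun ⟨h, h'⟩ => ⟨((e3 x).2 (Or.inr h)).resolve_right h', fun h'' => e2 x h'' h⟩,
        fun ⟨h, h'⟩ => ⟨((e3 x).1 (Or.inl h)).resolve_left h', e1 x h⟩⟩
    have g2 : M \ N = J \ I := by
      ext x
      simp only [Finset.mem_sdiff]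
      exact ⟨fun ⟨h, h'⟩ => ⟨((e3 x).1 (Or.inr h)).resolve_right h', fun h'' => e1 x h'' h⟩,
        fun ⟨h, h'⟩ => ⟨((e3 x).2 (Or.inl h)).resolve_left h', e2 x h⟩⟩
    rw [g1, g2] at f3
    omega
  · -- nothing is shared any more: `I = N`, `J = M`, and the two exponents cancel
    push Not at hc hc'
    have gI : N = I := by
      ext x
      exact ⟨fun h => ((e3 x).2 (Or.inr h)).resolve_right fun h' => hc' x h' h,
        fun h => ((e3 x).1 (Or.inl h)).resolve_left (hc x h)⟩
    have gJ : M = J := by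
      ext x
      exact ⟨fun h => ((e3 x).1 (Or.inr h)).resolve_right (hc' x h),
        fun h => ((e3 x).2 (Or.inl h)).resolve_left fun h' => hc x h' h⟩
    subst gI gJ
    have s1 : N \ M = N := Finset.sdiff_eq_self_of_disjoint (Finset.disjoint_left.2 hc)
    have s2 : M \ N = M := Finset.sdiff_eq_self_of_disjoint (Finset.disjoint_left.2 hc')
    rw [s1, s2, Finset.union_self, Finset.union_self]
    have t1 := two_ell_self N
    have t2 := two_ell_self M
    rw [hMN] at t2
    have t3 : (ell n N N : ℤ) - ell n M M = 0 := by omega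
    rw [t3, zpow_zero, one_mul]

end
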